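/- arXiv:2509.14538 — 2 statements merged into one kernel-verified Lean document; each statement's English description precedes it below -/
import Mathlib

section
/- Let n ≥ 2, λ > 0, and let g = 4π ∑_{j=1}^{k₁} m_j δ_{p_j}, h = 4π ∑_{j=1}^{k₂} n_j δ_{q_j} with m_j, n_j ∈ ℕ. If (u, v) is a topological solution of the system Δu = λ e^v (e^u − 1) + g, Δv = λ e^u (e^v − 1) + h on ℤⁿ, then for every ε ∈ (0,1) there is a constant C(ε) > 0 such that |u(x)| ≤ C(ε) e^{−m(1−ε) d(x)} and |v(x)| ≤ C(ε) e^{−m(1−ε) d(x)} for all x ∈ ℤⁿ, where m = ln(1 + λ/(2n)). -/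
/-!
Outside a finite set the sources `g`, `h` vanish, so the first equation reads
`∑_{y ~ x} u y = 2 n u x + λ e^v (e^u - 1)`. The two terms on the right have the same sign, and
`|e^t - 1| ≥ |t| e^{-|t|}`, so where `|u|, |v| ≤ δ / 2` one gets
`(2 n + λ e^{-δ}) |u x| ≤ ∑_{y ~ x} |u y|`. With `a = m (1 - ε)` one has
`1 < e^a < 1 + λ / (2 n)`, hence `δ > 0` can be chosen with `2 n + λ e^{-δ} = 2 n e^a`
(`exists_delta`). Thus, far from the origin, `|u x|` is at most `e^{-a}` times the average of `|u|`
over the neighbours of `x`, all of which lie at distance at least `d(x) - 1`. Iterating this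
(`decay_of_average_bound`) and using that `u` is bounded yields `|u x| ≤ C e^{-a d(x)}`.
The system is symmetric in `u` and `v`, so `decay_component` covers both.
-/

open Filter Real

noncomputable section

namespace CS

abbrev Lat (n : ℕ) := Fin n → ℤ

/-- d(x) = ∑ᵢ |xᵢ|, the graph distance to the origin on ℤⁿ. -/
def latDist {n : ℕ} (x : Lat n) : ℕ := ∑ i, (x i).natAbs

/-- x ~ y iff ∑ᵢ |xᵢ − yᵢ| = 1. -/
def adjacent {n : ℕ} (x y : Lat n) : Prop := (∑ i, (x i - y i).natAbs) = 1

instance {n : ℕ} (x y : Lat n) : Decidable (adjacent x y) :=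
  decidable_of_iff ((∑ i, (x i - y i).natAbs) = 1) Iff.rfl

def unitVec {n : ℕ} (i : Fin n) : Lat n := fun j => if j = i then 1 else 0

/-- The graph Laplacian Δu(x) = ∑_{y ~ x} (u(y) − u(x)) on ℤⁿ. -/
def lapl {n : ℕ} (u : Lat n → ℝ) (x : Lat n) : ℝ :=
  ∑ i, (u (x + unitVec i) + u (x - unitVec i) - 2 * u x)

/-- The filter of neighborhoods of infinity (d(x) → +∞) on ℤⁿ. -/
def atInfty (n : ℕ) : Filter (Lat n) := Filter.comap latDist Filter.atTop

/-- The Dirac mass at p. -/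
def dirac {n : ℕ} (p x : Lat n) : ℝ := if x = p then 1 else 0

/-- (u,v) is a topological solution of Δu = λ eᵛ(eᵘ−1) + g, Δv = λ eᵘ(eᵛ−1) + h
with u, v → 0 at infinity. -/
def IsTopSol {n : ℕ} (lam : ℝ) (g h u v : Lat n → ℝ) : Prop :=
  (∀ x, lapl u x = lam * Real.exp (v x) * (Real.exp (u x) - 1) + g x) ∧
  (∀ x, lapl v x = lam * Real.exp (u x) * (Real.exp (v x) - 1) + h x) ∧
  Filter.Tendsto u (atInfty n) (nhds 0) ∧
  Filter.Tendsto v (atInfty n) (nhds 0)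

section Aux

variable {n : ℕ}

theorem latDist_le_add (x y : Lat n) : latDist x ≤ latDist (x + y) + latDist y := by
  unfold latDist
  rw [← Finset.sum_add_distrib]
  refine Finset.sum_le_sum fun i _ => ?_
  simp only [Pi.add_apply]
  omega

theorem latDist_unitVec (i : Fin n) : latDist (unitVec i) = 1 := by
  simp [latDist, unitVec, apply_ite Int.natAbs]

theorem latDist_neg (x : Lat n) : latDist (-x) = latDist x := by
  simp [latDist]

theorem latDist_add_unitVec (x : Lat n) (i : Fin n) :
    latDist x ≤ latDist (x + unitVec i) + 1 := by
  have := latDist_le_add x (unitVec i)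
  rwa [latDist_unitVec] at this

theorem latDist_sub_unitVec (x : Lat n) (i : Fin n) :
    latDist x ≤ latDist (x - unitVec i) + 1 := by
  have := latDist_le_add x (-unitVec i)
  rwa [latDist_neg, latDist_unitVec, ← sub_eq_add_neg] at this

theorem finite_ball (R : ℕ) : {x : Lat n | latDist x < R}.Finite := by
  refine (Set.finite_Icc (fun _ => -(R : ℤ) : Lat n) (fun _ => (R : ℤ))).subset fun x hx => ?_
  have key : ∀ i, (x i).natAbs ≤ R := fun i =>
    (Finset.single_le_sum (f := fun i => (x i).natAbs) (fun _ _ => Nat.zero_le _)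
      (Finset.mem_univ i)).trans (le_of_lt hx)
  exact ⟨fun i => by have := key i; simp only; omega,
    fun i => by have := key i; simp only; omega⟩

theorem exists_forall_of_eventually {P : Lat n → Prop} (hP : ∀ᶠ x in atInfty n, P x) :
    ∃ R : ℕ, ∀ x, R ≤ latDist x → P x := by
  rw [atInfty, Filter.eventually_comap, Filter.eventually_atTop] at hP
  obtain ⟨R, hR⟩ := hP
  exact ⟨R, fun x hx => hR _ hx x rfl⟩

theorem eventually_of_finite {S : Set (Lat n)} (hS : S.Finite) :
    ∀ᶠ x in atInfty n, x ∉ S := by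
  rw [atInfty, Filter.eventually_comap]
  filter_upwards [(hS.image latDist).eventually_cofinite_notMem.filter_mono
    Nat.cofinite_eq_atTop.ge] with b hb x hx hxS
  exact hb ⟨x, hxS, hx⟩

theorem bounded_of_tendsto {u : Lat n → ℝ} (hu : Tendsto u (atInfty n) (nhds 0)) :
    ∃ B : ℝ, 0 < B ∧ ∀ x, |u x| ≤ B := by
  obtain ⟨R, hR⟩ := exists_forall_of_eventually
    (hu.abs.eventually_lt_const (show |(0 : ℝ)| < 1 by simp))
  obtain ⟨B, hB⟩ := ((finite_ball (n := n) R).image fun x => |u x|).bddAbove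
  refine ⟨max 1 B, by positivity, fun x => ?_⟩
  by_cases hx : latDist x < R
  · exact (hB ⟨x, hx, rfl⟩).trans (le_max_right _ _)
  · exact (hR x (not_lt.mp hx)).le.trans (le_max_left _ _)

/-- A sum of Dirac masses vanishes near infinity. -/
theorem eventually_source_eq_zero {k : ℕ} (m : Fin k → ℕ) (p : Fin k → Lat n) :
    ∀ᶠ x in atInfty n, 4 * Real.pi * ∑ j, (m j : ℝ) * dirac (p j) x = 0 := by
  filter_upwards [eventually_of_finite (Set.finite_range p)] with x hx
  rw [Finset.sum_eq_zero, mul_zero]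
  intro j _
  have : x ≠ p j := fun h => hx ⟨j, h.symm⟩
  simp [dirac, this]

/-- If, outside a ball, `|w x|` is at most `e^{-a}` times the average of `|w|` over the neighbours
of `x`, then a bounded `w` decays like `e^{-a d(x)}`: each step away from the ball gains a factor
`e^{-a}`. -/
theorem decay_of_average_bound (hn : 0 < n) {w : Lat n → ℝ} {a B : ℝ} (ha : 0 ≤ a) {R : ℕ}
    (hB : ∀ x, |w x| ≤ B)
    (hw : ∀ x, R ≤ latDist x →
      2 * n * Real.exp a * |w x| ≤ ∑ i, (|w (x + unitVec i)| + |w (x - unitVec i)|)) (x : Lat n) :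
    |w x| ≤ B * Real.exp (a * R) * Real.exp (-a * latDist x) := by
  have hn' : (0 : ℝ) < n := by exact_mod_cast hn
  have hB0 : 0 ≤ B := (abs_nonneg _).trans (hB x)
  have step : ∀ k : ℕ, ∀ y, R + k ≤ latDist y → |w y| ≤ B * Real.exp (-a * k) := by
    intro k
    induction k with
    | zero => intro y _; simpa using hB y
    | succ k ih =>
      intro y hy
      have h1 := hw y (by omega)
      have h2 : ∑ i : Fin n, (|w (y + unitVec i)| + |w (y - unitVec i)|)
          ≤ ∑ _i : Fin n, 2 * (B * Real.exp (-a * k)) := by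
        refine Finset.sum_le_sum fun i _ => ?_
        have h3 := ih (y + unitVec i) (by have := latDist_add_unitVec y i; omega)
        have h4 := ih (y - unitVec i) (by have := latDist_sub_unitVec y i; omega)
        linarith
      rw [Finset.sum_const, Finset.card_univ, Fintype.card_fin, nsmul_eq_mul] at h2
      have h5 : Real.exp a * |w y| ≤ B * Real.exp (-a * k) := by
        refine le_of_mul_le_mul_left ?_ (show (0 : ℝ) < 2 * n by positivity)
        linarith
      have h6 : Real.exp (-a * (k + 1 : ℕ)) = Real.exp (-a * k) * (Real.exp a)⁻¹ := by
        rw [← Real.exp_neg, ← Real.exp_add]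
        congr 1
        push_cast
        ring
      rw [h6, ← mul_assoc, ← div_eq_mul_inv, le_div_iff₀ (Real.exp_pos a)]
      linarith
  rw [mul_assoc, ← Real.exp_add]
  by_cases hx : R ≤ latDist x
  · obtain ⟨k, hk⟩ := Nat.exists_eq_add_of_le hx
    refine (step k x hk.ge).trans_eq ?_
    rw [hk]
    congr 2
    push_cast
    ring
  · refine (hB x).trans (le_mul_of_one_le_right hB0 (Real.one_le_exp ?_))
    have : (latDist x : ℝ) ≤ R := by exact_mod_cast (not_le.mp hx).le
    nlinarith

/-- The lower bound holds because `t` and `e^t - 1` have the same sign and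
`|e^t - 1| ≥ |t| e^{-|t|}`. -/
theorem abs_add_exp_sub_one {b c t : ℝ} (hc : 0 ≤ c) :
    (b + c * Real.exp (-|t|)) * |t| ≤ |b * t + c * (Real.exp t - 1)| := by
  rcases le_total 0 t with ht | ht
  · rw [abs_of_nonneg ht]
    refine le_trans ?_ (le_abs_self _)
    have h1 := Real.add_one_le_exp t
    have h2 : Real.exp (-t) ≤ 1 := Real.exp_le_one_iff.mpr (by linarith)
    have h3 : Real.exp (-t) * t ≤ Real.exp t - 1 := by nlinarith
    nlinarith [mul_le_mul_of_nonneg_left h3 hc]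
  · rw [abs_of_nonpos ht, neg_neg]
    refine le_trans ?_ (neg_le_abs _)
    have h1 := Real.add_one_le_exp (-t)
    have h2 : Real.exp t * Real.exp (-t) = 1 := by rw [← Real.exp_add]; simp
    have h3 : Real.exp t * (-t) ≤ 1 - Real.exp t := by nlinarith [Real.exp_pos t]
    nlinarith [mul_le_mul_of_nonneg_left h3 hc]

theorem exists_delta (hn : 0 < n) {lam ε : ℝ} (hlam : 0 < lam) (hε : ε ∈ Set.Ioo (0 : ℝ) 1) :
    ∃ δ : ℝ, 0 < δ ∧ 2 * n * Real.exp (Real.log (1 + lam / (2 * n)) * (1 - ε))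
      = 2 * n + lam * Real.exp (-δ) := by
  have hn' : (0 : ℝ) < n := by exact_mod_cast hn
  have hq : 0 < lam / (2 * n) := by positivity
  set m := Real.log (1 + lam / (2 * n)) with hm
  have hm0 : 0 < m := Real.log_pos (by linarith)
  have hexp : Real.exp m = 1 + lam / (2 * n) := Real.exp_log (by linarith)
  have h1 : 1 < Real.exp (m * (1 - ε)) := Real.one_lt_exp_iff.mpr (mul_pos hm0 (by linarith [hε.2]))
  have h2 : Real.exp (m * (1 - ε)) < 1 + lam / (2 * n) := by
    rw [← hexp, Real.exp_lt_exp]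
    nlinarith [hε.1]
  have hκ : 0 < 2 * n * (Real.exp (m * (1 - ε)) - 1) / lam := by
    have : 0 < Real.exp (m * (1 - ε)) - 1 := by linarith
    positivity
  refine ⟨-Real.log (2 * n * (Real.exp (m * (1 - ε)) - 1) / lam), ?_, ?_⟩
  · rw [neg_pos]
    refine Real.log_neg hκ ?_
    rw [div_lt_one hlam]
    have h3 : Real.exp (m * (1 - ε)) - 1 < lam / (2 * n) := by linarith
    rw [lt_div_iff₀ (by positivity)] at h3
    linarith
  · rw [neg_neg, Real.exp_log hκ]
    field_simp
    ring

theorem sum_neighbours (u : Lat n → ℝ) (x : Lat n) :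
    ∑ i, (u (x + unitVec i) + u (x - unitVec i)) = 2 * n * u x + lapl u x := by
  simp only [lapl, Finset.sum_sub_distrib, Finset.sum_const, Finset.card_univ, Fintype.card_fin,
    nsmul_eq_mul]
  ring

/-- Decay of one component of the system, given only its own equation and that both components
vanish at infinity. -/
theorem decay_component (hn : 0 < n) {lam ε : ℝ} (hlam : 0 < lam) (hε : ε ∈ Set.Ioo (0 : ℝ) 1)
    {g u v : Lat n → ℝ} (hg : ∀ᶠ x in atInfty n, g x = 0)
    (heq : ∀ x, lapl u x = lam * Real.exp (v x) * (Real.exp (u x) - 1) + g x)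
    (hu : Tendsto u (atInfty n) (nhds 0)) (hv : Tendsto v (atInfty n) (nhds 0)) :
    ∃ C : ℝ, 0 < C ∧ ∀ x : Lat n,
      |u x| ≤ C * Real.exp (-(Real.log (1 + lam / (2 * n)) * (1 - ε)) * (latDist x : ℝ)) := by
  obtain ⟨δ, hδ, hδe⟩ := exists_delta hn hlam hε
  obtain ⟨B, hB0, hB⟩ := bounded_of_tendsto hu
  have hδ2 : |(0 : ℝ)| < δ / 2 := by simpa using hδ
  obtain ⟨R, hR⟩ := exists_forall_of_eventually
    (hg.and ((hu.abs.eventually_lt_const hδ2).and (hv.abs.eventually_lt_const hδ2)))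
  have ha : 0 ≤ Real.log (1 + lam / (2 * n)) * (1 - ε) := by
    refine mul_nonneg (Real.log_nonneg ?_) (by linarith [hε.2])
    have : 0 ≤ lam / (2 * (n : ℝ)) := by positivity
    linarith
  refine ⟨_, by positivity, decay_of_average_bound hn ha (R := R) hB fun x hx => ?_⟩
  obtain ⟨hgx, hux, hvx⟩ := hR x hx
  have hc : lam * Real.exp (-δ) ≤ lam * Real.exp (v x) * Real.exp (-|u x|) := by
    rw [mul_assoc, ← Real.exp_add]
    refine mul_le_mul_of_nonneg_left (Real.exp_le_exp.mpr ?_) hlam.le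
    linarith [neg_abs_le (v x)]
  calc 2 * n * Real.exp (Real.log (1 + lam / (2 * n)) * (1 - ε)) * |u x|
      = (2 * n + lam * Real.exp (-δ)) * |u x| := by rw [hδe]
    _ ≤ (2 * n + lam * Real.exp (v x) * Real.exp (-|u x|)) * |u x| := by gcongr
    _ ≤ |2 * n * u x + lam * Real.exp (v x) * (Real.exp (u x) - 1)| :=
      abs_add_exp_sub_one (by positivity)
    _ = |∑ i, (u (x + unitVec i) + u (x - unitVec i))| := by
      rw [sum_neighbours, heq, hgx, add_zero]
    _ ≤ ∑ i, |u (x + unitVec i) + u (x - unitVec i)| := Finset.abs_sum_le_sum_abs _ _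
    _ ≤ ∑ i, (|u (x + unitVec i)| + |u (x - unitVec i)|) :=
      Finset.sum_le_sum fun _ _ => abs_add_le _ _

end Aux

/-- exponential decay of topological solutions, with rate
m = ln(1 + λ/(2n)). -/
theorem decay_of_topological_solution
    {n : ℕ} (hn : 2 ≤ n) (lam : ℝ) (hlam : 0 < lam)
    {k₁ k₂ : ℕ} (m : Fin k₁ → ℕ) (nn : Fin k₂ → ℕ)
    (p : Fin k₁ → Lat n) (q : Fin k₂ → Lat n)
    (g h : Lat n → ℝ)
    (hg : g = fun x => 4 * Real.pi * ∑ j, (m j : ℝ) * dirac (p j) x)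
    (hh : h = fun x => 4 * Real.pi * ∑ j, (nn j : ℝ) * dirac (q j) x)
    (u v : Lat n → ℝ) (hsol : IsTopSol lam g h u v)
    (ε : ℝ) (hε : ε ∈ Set.Ioo (0 : ℝ) 1) :
    ∃ C : ℝ, 0 < C ∧ ∀ x : Lat n,
      |u x| ≤ C * Real.exp (-(Real.log (1 + lam / (2 * n)) * (1 - ε)) * (latDist x : ℝ)) ∧
      |v x| ≤ C * Real.exp (-(Real.log (1 + lam / (2 * n)) * (1 - ε)) * (latDist x : ℝ)) := by
  obtain ⟨heu, hev, hu, hv⟩ := hsol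
  have hn0 : 0 < n := by omega
  obtain ⟨C₁, hC₁, h₁⟩ := decay_component hn0 hlam hε
    (by rw [hg]; exact eventually_source_eq_zero m p) heu hu hv
  obtain ⟨C₂, hC₂, h₂⟩ := decay_component hn0 hlam hε
    (by rw [hh]; exact eventually_source_eq_zero nn q) hev hv hu
  refine ⟨max C₁ C₂, lt_max_of_lt_left hC₁, fun x => ⟨(h₁ x).trans ?_, (h₂ x).trans ?_⟩⟩
  · gcongr
    exact le_max_left _ _
  · gcongr
    exact le_max_right _ _

end CS
end
end

section
/- Let n ≥ 2 and fix g = 4π ∑_{j=1}^{k₁} m_j δ_{p_j}, h = 4π ∑_{j=1}^{k₂} n_j δ_{q_j} with m_j, n_j ∈ ℕ, and set B = 4π ∑_{j=1}^{k₁} m_j + 4π ∑_{j=1}^{k₂} n_j. Let (u_λ, v_λ) be a topological solution of Δu = λ e^v (e^u − 1) + g, Δv = λ e^u (e^v − 1) + h on ℤⁿ. If λ > 2B(2n + e^{4B}), then u_λ(x) + v_λ(x) ≥ ln(1 − 2B/λ) for all x ∈ ℤⁿ. Consequently, for any family of topological solutions (u_λ, v_λ) indexed by λ, u_λ(x) →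 0 and v_λ(x) → 0 for every x ∈ ℤⁿ as λ → +∞. -/
/-!
By the maximum principle `u, v ≤ 0`. The sum `w = u + v` satisfies
`Δw = g + h - λ A` with `A = eᵘ + eᵛ - 2eᵘ⁺ᵛ ≥ 0`. Every sublevel set `{w < t}` with `t < 0`
is finite, and summing the equation over it gives (`flux`, `IsTopSol.flux_bounds`)

  (increments of `w` over the edges leaving the set) + `λ ∑ A` = `∑ (g + h) ≤ B`,

where all terms on the left are nonnegative. Hence `A ≤ ε := B / λ` at each point, and `w`
increases by at most `B` over each edge.

With `s = exp (w / 2)`, the arithmetic-geometric mean inequality turns `A ≤ ε` into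
`2 s (1 - s) ≤ ε`, so at each point either `eʷ ≥ 1 - 2ε` or `eʷ ≤ ε²` (`dichotomy`). For
`λ > 2B(2n + e⁴ᴮ)` the edge bound prevents a neighbour of a point of the second kind from being
of the first kind, so a point with `eʷ ≤ ε²` would yield a whole ray of such points, contradicting
`w → 0` at infinity. The limits as `λ → ∞` follow by squeezing, since
`log (1 - 2B/λ) ≤ u + v ≤ u, v ≤ 0`.
-/


open Filter Real

noncomputable section

namespace CS

/-! ### Finiteness of sublevel sets and the sign of solutions -/

lemma finite_latDist_lt {n : ℕ} (N : ℕ) : {x : Lat n | latDist x < N}.Finite := by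
  refine (Set.finite_Icc (fun _ => -(N : ℤ)) (fun _ => (N : ℤ))).subset ?_
  intro x hx
  have key : ∀ i, (x i).natAbs < N := fun i =>
    lt_of_le_of_lt (Finset.single_le_sum (f := fun i => (x i).natAbs)
      (fun _ _ => Nat.zero_le _) (Finset.mem_univ i)) hx
  constructor <;> intro i <;> have := key i <;> simp only <;> omega

lemma finite_sublevel {n : ℕ} {w : Lat n → ℝ} (hw : Tendsto w (atInfty n) (nhds 0))
    {t : ℝ} (ht : t < 0) : {x | w x < t}.Finite := by
  have h1 : ∀ᶠ x in atInfty n, t < w x := hw.eventually (lt_mem_nhds ht)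
  rw [atInfty, eventually_comap] at h1
  obtain ⟨N, hN⟩ := eventually_atTop.1 h1
  refine (finite_latDist_lt N).subset fun x hx => ?_
  by_contra hc
  exact absurd (hN _ (not_lt.1 hc) x rfl) (not_lt.2 (le_of_lt hx))

/-- Maximum principle: a function vanishing at infinity whose Laplacian is positive wherever
the function is positive is nonpositive, since it would otherwise attain a positive maximum. -/
lemma nonpos_of_lapl_pos {n : ℕ} {u : Lat n → ℝ} (hu : Tendsto u (atInfty n) (nhds 0))
    (hl : ∀ x, 0 < u x → 0 < lapl u x) (x : Lat n) : u x ≤ 0 := by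
  by_contra! hx
  have hu' : Tendsto (fun y => - u y) (atInfty n) (nhds 0) := by simpa using hu.neg
  have hfin := finite_sublevel hu' (t := -(u x / 2)) (by linarith)
  obtain ⟨z, hz, hmax⟩ := hfin.exists_maximalFor u _ ⟨x, by simp; linarith⟩
  have hz2 : u x / 2 < u z := by simpa using hz
  have hall : ∀ y, u y ≤ u z := by
    intro y
    by_cases hy : u x / 2 < u y
    · by_contra! hc
      exact absurd (hmax (j := y) (by simpa using hy) hc.le) (not_le.2 hc)
    · linarith
  have h1 := hl z (by linarith)
  have h2 : lapl u z ≤ 0 := Finset.sum_nonpos fun i _ => by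
    linarith [hall (z + unitVec i), hall (z - unitVec i)]
  linarith

/-! ### Flux through the boundary of a sublevel set -/

/-- Telescoping along one coordinate direction: the sum over a sublevel set `S` of the second
difference of `w` is the total increment of `w` over the edges leaving `S`, so it is nonnegative
and dominates the increment over any single such edge. -/
lemma flux_dir {n : ℕ} {w : Lat n → ℝ} {t : ℝ} (S : Finset (Lat n))
    (hS : ∀ x, x ∈ S ↔ w x < t) (e : Lat n) :
    0 ≤ ∑ x ∈ S, (w (x + e) + w (x - e) - 2 * w x) ∧
    ∀ x ∈ S, x + e ∉ S →
      w (x + e) - w x ≤ ∑ x ∈ S, (w (x + e) + w (x - e) - 2 * w x) := by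
  classical
  set D : Lat n → ℝ := fun x => w (x + e) - w x with hD
  set T := S.image (fun x => x - e) with hT
  have hTmem : ∀ x, x ∈ T ↔ x + e ∈ S := by
    intro x
    simp only [hT, Finset.mem_image]
    constructor
    · rintro ⟨y, hy, rfl⟩; simpa using hy
    · intro h; exact ⟨x + e, h, by simp⟩
  have hsum : ∑ x ∈ S, (w (x + e) + w (x - e) - 2 * w x)
      = ∑ x ∈ S \ T, D x - ∑ x ∈ T \ S, D x := by
    rw [Finset.sum_sdiff_sub_sum_sdiff, hT,
      Finset.sum_image (fun a _ b _ hab => sub_left_injective hab), ← Finset.sum_sub_distrib]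
    refine Finset.sum_congr rfl fun x _ => ?_
    simp only [hD, sub_add_cancel]
    ring
  have hpos : ∀ x ∈ S \ T, 0 ≤ D x := by
    intro x hx
    rw [Finset.mem_sdiff, hTmem, hS, hS] at hx
    simp only [hD]
    linarith [hx.1, not_lt.1 hx.2]
  have hneg : ∑ x ∈ T \ S, D x ≤ 0 := by
    refine Finset.sum_nonpos fun x hx => ?_
    rw [Finset.mem_sdiff, hTmem, hS, hS] at hx
    simp only [hD]
    linarith [hx.1, not_lt.1 hx.2]
  rw [hsum]
  refine ⟨by linarith [Finset.sum_nonneg hpos], fun x hx hxe => ?_⟩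
  have := Finset.single_le_sum hpos (Finset.mem_sdiff.2 ⟨hx, fun h => hxe ((hTmem x).1 h)⟩)
  simp only [hD] at this hneg ⊢
  linarith

lemma flux {n : ℕ} {w : Lat n → ℝ} {t : ℝ} (S : Finset (Lat n))
    (hS : ∀ x, x ∈ S ↔ w x < t) :
    0 ≤ ∑ x ∈ S, lapl w x ∧
    ∀ i, ∀ x ∈ S, x + unitVec i ∉ S → w (x + unitVec i) - w x ≤ ∑ x ∈ S, lapl w x := by
  simp only [lapl]
  rw [Finset.sum_comm]
  refine ⟨Finset.sum_nonneg fun i _ => (flux_dir S hS _).1, fun i x hx hxe => ?_⟩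
  refine ((flux_dir S hS (unitVec i)).2 x hx hxe).trans ?_
  exact Finset.single_le_sum
    (f := fun i => ∑ x ∈ S, (w (x + unitVec i) + w (x - unitVec i) - 2 * w x))
    (fun i _ => (flux_dir S hS _).1) (Finset.mem_univ i)

lemma lapl_add {n : ℕ} (u v : Lat n → ℝ) (x : Lat n) :
    lapl (fun y => u y + v y) x = lapl u x + lapl v x := by
  simp only [lapl, ← Finset.sum_add_distrib]
  exact Finset.sum_congr rfl fun i _ => by ring

/-! ### Sources -/

lemma sum_source_le {n k : ℕ} (m : Fin k → ℕ) (p : Fin k → Lat n) (S : Finset (Lat n)) :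
    ∑ x ∈ S, 4 * Real.pi * ∑ j, (m j : ℝ) * dirac (p j) x ≤ 4 * Real.pi * ∑ j, (m j : ℝ) := by
  rw [← Finset.mul_sum, Finset.sum_comm]
  refine mul_le_mul_of_nonneg_left (Finset.sum_le_sum fun j _ => ?_) (by positivity)
  rw [← Finset.mul_sum]
  refine mul_le_of_le_one_right (by positivity) ?_
  simp only [dirac, Finset.sum_ite_eq']
  split_ifs <;> norm_num

lemma source_nonneg {n k : ℕ} (m : Fin k → ℕ) (p : Fin k → Lat n) (x : Lat n) :
    0 ≤ 4 * Real.pi * ∑ j, (m j : ℝ) * dirac (p j) x := by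
  refine mul_nonneg (by positivity) (Finset.sum_nonneg fun j _ => ?_)
  unfold dirac
  split_ifs <;> simp

/-! ### The pointwise dichotomy and the lower bound -/

lemma IsTopSol.nonpos {n : ℕ} {lam : ℝ} {g h u v : Lat n → ℝ} (hs : IsTopSol lam g h u v)
    (hl : 0 < lam) (hg : ∀ x, 0 ≤ g x) (hh : ∀ x, 0 ≤ h x) :
    (∀ x, u x ≤ 0) ∧ (∀ x, v x ≤ 0) := by
  obtain ⟨h1, h2, h3, h4⟩ := hs
  have key : ∀ a b : ℝ, 0 < a → 0 < lam * Real.exp b * (Real.exp a - 1) := fun a b ha =>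
    mul_pos (mul_pos hl (Real.exp_pos _)) (by linarith [Real.add_one_le_exp a])
  constructor
  · refine nonpos_of_lapl_pos h3 fun x hx => ?_
    rw [h1]; linarith [key _ (v x) hx, hg x]
  · refine nonpos_of_lapl_pos h4 fun x hx => ?_
    rw [h2]; linarith [key _ (u x) hx, hh x]

/-- The absorption term `eᵘ + eᵛ - 2eᵘ⁺ᵛ` of the equation for `u + v`. -/
def absorb {n : ℕ} (u v : Lat n → ℝ) (x : Lat n) : ℝ :=
  Real.exp (v x) * (1 - Real.exp (u x)) + Real.exp (u x) * (1 - Real.exp (v x))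

lemma absorb_nonneg {n : ℕ} {u v : Lat n → ℝ} (hu : ∀ x, u x ≤ 0) (hv : ∀ x, v x ≤ 0)
    (x : Lat n) : 0 ≤ absorb u v x := by
  have h1 := Real.exp_le_one_iff.2 (hu x)
  have h2 := Real.exp_le_one_iff.2 (hv x)
  exact add_nonneg (mul_nonneg (Real.exp_pos _).le (by linarith))
    (mul_nonneg (Real.exp_pos _).le (by linarith))

/-- Flux balance on the sublevel sets of `u + v`: the absorption at each point is at most `B / λ`,
and `u + v` increases by at most `B` over a step in a positive coordinate direction. -/
lemma IsTopSol.flux_bounds {n : ℕ} {lam B : ℝ} {g h u v : Lat n → ℝ}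
    (hs : IsTopSol lam g h u v) (hl : 0 < lam) (hg : ∀ x, 0 ≤ g x) (hh : ∀ x, 0 ≤ h x)
    (hgh : ∀ S : Finset (Lat n), ∑ x ∈ S, (g x + h x) ≤ B) :
    (∀ x, lam * absorb u v x ≤ B) ∧
    (∀ i x, (u (x + unitVec i) + v (x + unitVec i)) - (u x + v x) ≤ B) := by
  obtain ⟨hu, hv⟩ := hs.nonpos hl hg hh
  obtain ⟨h1, h2, h3, h4⟩ := hs
  have hB : 0 ≤ B := by simpa using hgh ∅
  have hw : Tendsto (fun y => u y + v y) (atInfty n) (nhds 0) := by simpa using h3.add h4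
  have hlap : ∀ x, lapl (fun y => u y + v y) x = (g x + h x) - lam * absorb u v x := by
    intro x
    rw [lapl_add, h1, h2, absorb]
    ring
  have hA := absorb_nonneg hu hv
  have hbal : ∀ S : Finset (Lat n), ∑ x ∈ S, lapl (fun y => u y + v y) x
      ≤ B - ∑ x ∈ S, lam * absorb u v x := by
    intro S
    simp only [hlap]
    rw [Finset.sum_sub_distrib]
    linarith [hgh S]
  constructor
  · intro x
    rcases (add_nonpos (hu x) (hv x)).lt_or_eq with hx | hx
    · have hfin := finite_sublevel hw (t := (u x + v x) / 2) (by linarith)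
      have hS : ∀ y, y ∈ hfin.toFinset ↔ u y + v y < (u x + v x) / 2 := by simp
      have hf := (flux (w := fun y => u y + v y) _ hS).1
      have hsing := Finset.single_le_sum (f := fun y => lam * absorb u v y)
        (fun y _ => mul_nonneg hl.le (hA y)) ((hS x).2 (by linarith))
      linarith [hbal hfin.toFinset]
    · have hu0 : u x = 0 := le_antisymm (hu x) (by linarith [hv x])
      have hv0 : v x = 0 := le_antisymm (hv x) (by linarith [hu x])
      simpa [absorb, hu0, hv0] using hB
  · intro i x
    by_cases hlt : u x + v x < u (x + unitVec i) + v (x + unitVec i)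
    · -- A level strictly between the two values, negative because `u + v ≤ 0`.
      set t := ((u x + v x) + (u (x + unitVec i) + v (x + unitVec i))) / 2 with ht
      have hfin := finite_sublevel hw (t := t)
        (by linarith [hu (x + unitVec i), hv (x + unitVec i)])
      have hS : ∀ y, y ∈ hfin.toFinset ↔ u y + v y < t := by simp
      have hf := (flux (w := fun y => u y + v y) _ hS).2 i x ((hS x).2 (by linarith))
        (fun hc => by have := (hS _).1 hc; linarith)
      have hsn := Finset.sum_nonneg (s := hfin.toFinset)
        (fun y _ => mul_nonneg hl.le (hA y))
      linarith [hbal hfin.toFinset]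
    · linarith

/-- If the absorption at `x` is at most `ε`, then `s = exp ((u + v) / 2)` satisfies
`2 s (1 - s) ≤ ε` by the arithmetic-geometric mean inequality, so that
`s ≥ 1 - ε` if `s ≥ 1 / 2` and `s ≤ ε` otherwise. -/
lemma dichotomy {n : ℕ} {u v : Lat n → ℝ} {ε : ℝ} (x : Lat n) (hw : u x + v x ≤ 0)
    (hε : absorb u v x ≤ ε) :
    1 - 2 * ε ≤ Real.exp (u x + v x) ∨ Real.exp (u x + v x) ≤ ε ^ 2 := by
  set a := Real.exp (u x / 2) with ha
  set b := Real.exp (v x / 2) with hb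
  have ea : Real.exp (u x) = a ^ 2 := by rw [ha, ← Real.exp_nat_mul]; congr 1; push_cast; ring
  have eb : Real.exp (v x) = b ^ 2 := by rw [hb, ← Real.exp_nat_mul]; congr 1; push_cast; ring
  have pa : 0 < a := Real.exp_pos _
  have pb : 0 < b := Real.exp_pos _
  have hab : a * b ≤ 1 := by
    rw [ha, hb, ← Real.exp_add]; exact Real.exp_le_one_iff.2 (by linarith)
  have hp := mul_pos pa pb
  have e : Real.exp (u x + v x) = (a * b) ^ 2 := by rw [Real.exp_add, ea, eb]; ring
  have key : 2 * (a * b) * (1 - a * b) ≤ ε := by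
    rw [absorb, ea, eb] at hε
    nlinarith [sq_nonneg (a - b)]
  rw [e]
  set s := a * b
  rcases le_total (1 / 2) s with h | h
  · left
    nlinarith
  · right
    have : s ≤ ε := by nlinarith
    exact pow_le_pow_left₀ hp.le this 2

lemma IsTopSol.lower_bound {n : ℕ} (hn : 2 ≤ n) {lam B : ℝ} {g h u v : Lat n → ℝ}
    (hs : IsTopSol lam g h u v) (hg : ∀ x, 0 ≤ g x) (hh : ∀ x, 0 ≤ h x)
    (hgh : ∀ S : Finset (Lat n), ∑ x ∈ S, (g x + h x) ≤ B)
    (hlam : 2 * B * (2 * (n : ℝ) + Real.exp (4 * B)) < lam) (x : Lat n) :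
    Real.log (1 - 2 * B / lam) ≤ u x + v x := by
  have hB : 0 ≤ B := by simpa using hgh ∅
  have hn' : (2 : ℝ) ≤ n := by exact_mod_cast hn
  have hE : Real.exp B ≤ Real.exp (4 * B) := Real.exp_le_exp.2 (by linarith)
  have hE1 : 1 ≤ Real.exp B := Real.one_le_exp hB
  have hl : 0 < lam := lt_of_le_of_lt (by positivity) hlam
  obtain ⟨hu, hv⟩ := hs.nonpos hl hg hh
  obtain ⟨hA, hG⟩ := hs.flux_bounds hl hg hh hgh
  set ε := B / lam with hεdef
  have hε0 : 0 ≤ ε := div_nonneg hB hl.le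
  have hBε : B = ε * lam := by rw [hεdef]; field_simp
  have hε : ε * (2 * (4 + Real.exp B)) ≤ 1 := by
    have : B * (2 * (4 + Real.exp B)) ≤ lam := by nlinarith
    rw [hεdef, div_mul_eq_mul_div, div_le_one hl]
    exact this
  have hε10 : ε ≤ 1 / 10 := by nlinarith
  have hεE : ε * Real.exp B ≤ 1 / 2 := by nlinarith
  have hdich : ∀ y, 1 - 2 * ε ≤ Real.exp (u y + v y) ∨ Real.exp (u y + v y) ≤ ε ^ 2 := by
    intro y
    refine dichotomy y (by linarith [hu y, hv y]) ?_
    rw [hεdef, le_div_iff₀ hl, mul_comm]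
    exact hA y
  -- A unit step raises `u + v` by at most `B`, too little to reach the upper alternative from the
  -- lower one; so the lower alternative propagates along a coordinate ray.
  let i : Fin n := ⟨0, by omega⟩
  have hstep : ∀ y, Real.exp (u y + v y) ≤ ε ^ 2 →
      Real.exp (u (y + unitVec i) + v (y + unitVec i)) ≤ ε ^ 2 := by
    intro y hy
    refine (hdich (y + unitVec i)).resolve_left fun hc => ?_
    have h1 : Real.exp (u (y + unitVec i) + v (y + unitVec i))
        ≤ Real.exp B * Real.exp (u y + v y) := by
      rw [← Real.exp_add]
      exact Real.exp_le_exp.2 (by linarith [hG i y])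
    have h2 : Real.exp B * Real.exp (u y + v y) ≤ Real.exp B * ε ^ 2 :=
      mul_le_mul_of_nonneg_left hy (Real.exp_pos _).le
    have h3 : Real.exp B * ε ^ 2 ≤ ε / 2 := by nlinarith
    linarith
  have hgood : 1 - 2 * ε ≤ Real.exp (u x + v x) := by
    refine (hdich x).resolve_right fun hbad => ?_
    have hray : ∀ k : ℕ, Real.exp (u (x + k • unitVec i) + v (x + k • unitVec i)) ≤ ε ^ 2 := by
      intro k
      induction k with
      | zero => simpa using hbad
      | succ k ih =>
        rw [succ_nsmul, ← add_assoc]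
        exact hstep _ ih
    have hw : Tendsto (fun y => u y + v y) (atInfty n) (nhds 0) := by
      simpa using hs.2.2.1.add hs.2.2.2
    have hfin := finite_sublevel hw (t := -1) (by norm_num)
    refine Set.infinite_of_injective_forall_mem (f := fun k : ℕ => x + k • unitVec i)
      ?_ (fun k => ?_) hfin
    · intro k l hkl
      have := congrFun hkl i
      simpa [unitVec] using this
    · have h1 := hray k
      have h2 : ε ^ 2 ≤ 1 / 100 := by nlinarith
      have h3 : (1 : ℝ) / 100 < Real.exp (-1) := by
        linarith [Real.exp_neg_one_gt_d9]
      exact Real.exp_lt_exp.1 (by linarith)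
  have h2 : 1 - 2 * B / lam = 1 - 2 * ε := by rw [hεdef]; ring
  rw [h2, Real.log_le_iff_le_exp (by linarith)]
  exact hgood

/-- lower bound u_λ + v_λ ≥ ln(1 − 2B/λ) for λ > 2B(2n + e^{4B}),
and, consequently, u_λ → 0 and v_λ → 0 pointwise as λ → +∞. -/
theorem lower_bound_and_limit_at_infinity
    {n : ℕ} (hn : 2 ≤ n)
    {k₁ k₂ : ℕ} (m : Fin k₁ → ℕ) (nn : Fin k₂ → ℕ)
    (p : Fin k₁ → Lat n) (q : Fin k₂ → Lat n)
    (g h : Lat n → ℝ)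
    (hg : g = fun x => 4 * Real.pi * ∑ j, (m j : ℝ) * dirac (p j) x)
    (hh : h = fun x => 4 * Real.pi * ∑ j, (nn j : ℝ) * dirac (q j) x)
    (B : ℝ)
    (hB : B = 4 * Real.pi * ∑ j, (m j : ℝ) + 4 * Real.pi * ∑ j, (nn j : ℝ)) :
    (∀ (lam : ℝ) (u v : Lat n → ℝ), IsTopSol lam g h u v →
        2 * B * (2 * (n : ℝ) + Real.exp (4 * B)) < lam →
        ∀ x, Real.log (1 - 2 * B / lam) ≤ u x + v x) ∧
    (∀ U V : ℝ → Lat n → ℝ,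
        (∀ lam : ℝ, 0 < lam → IsTopSol lam g h (U lam) (V lam)) →
        ∀ x, Filter.Tendsto (fun lam => U lam x) Filter.atTop (nhds 0) ∧
             Filter.Tendsto (fun lam => V lam x) Filter.atTop (nhds 0)) := by
  have hg0 : ∀ x, 0 ≤ g x := fun x => hg ▸ source_nonneg m p x
  have hh0 : ∀ x, 0 ≤ h x := fun x => hh ▸ source_nonneg nn q x
  have hgh : ∀ S : Finset (Lat n), ∑ x ∈ S, (g x + h x) ≤ B := by
    intro S
    rw [Finset.sum_add_distrib, hg, hh, hB]
    exact add_le_add (sum_source_le m p S) (sum_source_le nn q S)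
  refine ⟨fun lam u v hs hlam x => hs.lower_bound hn hg0 hh0 hgh hlam x, fun U V hUV x => ?_⟩
  have hlim : Tendsto (fun lam : ℝ => Real.log (1 - 2 * B / lam)) atTop (nhds 0) := by
    have h1 : Tendsto (fun lam : ℝ => 1 - 2 * B / lam) atTop (nhds 1) := by
      simpa using (tendsto_const_nhds (x := (1 : ℝ))).sub
        (tendsto_const_nhds (x := 2 * B).div_atTop tendsto_id)
    simpa using h1.log one_ne_zero
  have hev : ∀ᶠ lam : ℝ in atTop, Real.log (1 - 2 * B / lam) ≤ U lam x + V lam x ∧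
      U lam x ≤ 0 ∧ V lam x ≤ 0 := by
    filter_upwards [eventually_gt_atTop 0,
      eventually_gt_atTop (2 * B * (2 * (n : ℝ) + Real.exp (4 * B)))] with lam h0 h1
    have hs := hUV lam h0
    have hnp := hs.nonpos h0 hg0 hh0
    exact ⟨hs.lower_bound hn hg0 hh0 hgh h1 x, hnp.1 x, hnp.2 x⟩
  constructor
  · refine tendsto_of_tendsto_of_tendsto_of_le_of_le' hlim tendsto_const_nhds ?_ ?_
    · filter_upwards [hev] with lam hl using by linarith
    · filter_upwards [hev] with lam hl using hl.2.1
  · refine tendsto_of_tendsto_of_tendsto_of_le_of_le' hlim tendsto_const_nhds ?_ ?_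
    · filter_upwards [hev] with lam hl using by linarith
    · filter_upwards [hev] with lam hl using hl.2.2

end CS
end
end
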